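/- Assume (Σ_n, T, (φ_n)) satisfies property (H*), that there exists an invariant sequence (μ_k) of Borel probability measures (ℒ*_k(μ_{k+1}) = μ_k for all k ∈ ℕ₀), and that the integers n_k can be chosen so that sup_k t_k < 1. Then for every k ∈ ℕ₀ and every Lipschitz (with respect to d_r) function f : Σ_k → ℝ, one has ‖ℒ^n_k(f) − ∫ f dμ_k‖_∞ → 0 as n → ∞. -/

import Mathlib

open MeasureTheory Real Filter

namespace NSShift

/-- The ambient sequence space `ℕ^ℕ`. -/
abbrev Seq := ℕ → ℕ

/-- The shift map `T`. -/
def shift (x : Seq) : Seq := fun i => x (i + 1)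

/-- Prepend one symbol to a sequence. -/
def cons (a : ℕ) (x : Seq) : Seq := fun i =>
  match i with
  | 0 => a
  | j + 1 => x j

/-- The non-stationary shift space `Σ_n` determined by alphabets `W` and
transition relations `A` (`A n i j` means `α^n_{ij} = 1`). -/
def Sig (W : ℕ → Set ℕ) (A : ℕ → ℕ → ℕ → Prop) (n : ℕ) : Set Seq :=
  {x | (∀ i, x i ∈ W (n + i)) ∧ ∀ i, A (n + i) (x i) (x (i + 1))}

/-- `x` and `y` agree in their first `k` coordinates (lie in a common `k`-cylinder). -/
def agrees (x y : Seq) (k : ℕ) : Prop := ∀ i < k, x i = y i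

open scoped Classical in
/-- The shift metric `d_r(x,y) = r^{min{i : x_i ≠ y_i}}`. -/
noncomputable def dr (r : ℝ) (x y : Seq) : ℝ :=
  if x = y then 0 else r ^ sInf {i | x i ≠ y i}

/-- `f` is locally `(r,m)`-Hölder continuous with Hölder constant `κ` of index `m` on `S`:
`V_k(f) ≤ κ r^k` for all `k ≥ m`. -/
def HolderOn (S : Set Seq) (r κ : ℝ) (m : ℕ) (f : Seq → ℝ) : Prop :=
  ∀ k, m ≤ k → ∀ x ∈ S, ∀ y ∈ S, agrees x y k → |f x - f y| ≤ κ * r ^ k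

/-- The Birkhoff sum `S_n(φ_k) = Σ_{i=0}^{n-1} φ_{k+i} ∘ T^i`. -/
noncomputable def birkhoff (φ : ℕ → Seq → ℝ) (k n : ℕ) (x : Seq) : ℝ :=
  ∑ i ∈ Finset.range n, φ (k + i) (shift^[i] x)

/-- `log B_m = Σ_{i=1}^{m} κ_{m−i} r^i`. -/
noncomputable def logB (κ : ℕ → ℝ) (r : ℝ) (m : ℕ) : ℝ :=
  ∑ i ∈ Finset.Icc 1 m, κ (m - i) * r ^ i

/-- `B_m = exp Σ_{i=1}^{m} κ_{m−i} r^i`. -/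
noncomputable def Bconst (κ : ℕ → ℝ) (r : ℝ) (m : ℕ) : ℝ := Real.exp (logB κ r m)


open scoped Classical in
/-- The Ruelle operator `ℒ_k(f)(x) = Σ_{Ty=x} e^{φ_k(y)} f(y)`, for `x ∈ Σ_{k+1}`. -/
noncomputable def Ruelle (W : ℕ → Set ℕ) (A : ℕ → ℕ → ℕ → Prop) (φ : ℕ → Seq → ℝ)
    (k : ℕ) (f : Seq → ℝ) (x : Seq) : ℝ :=
  ∑' a : ℕ, if cons a x ∈ Sig W A k then Real.exp (φ k (cons a x)) * f (cons a x) else 0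

/-- The iterated Ruelle operator `ℒ^n_k = ℒ_{k+n-1} ∘ ⋯ ∘ ℒ_k`. -/
noncomputable def RuelleIter (W : ℕ → Set ℕ) (A : ℕ → ℕ → ℕ → Prop) (φ : ℕ → Seq → ℝ)
    (k : ℕ) : ℕ → (Seq → ℝ) → Seq → ℝ
  | 0 => fun f => f
  | n + 1 => fun f => Ruelle W A φ (k + n) (RuelleIter W A φ k n f)

/-- `w` is a `k`-admissible word of length `len`. -/
def Adm (W : ℕ → Set ℕ) (A : ℕ → ℕ → ℕ → Prop) (k : ℕ) (w : ℕ → ℕ) (len : ℕ) : Prop :=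
  (∀ i < len, w i ∈ W (k + i)) ∧ ∀ i, i + 1 < len → A (k + i) (w i) (w (i + 1))

/-- Prepend the first `len` symbols of `w` to the sequence `x` (the inverse branch `τ_w`). -/
def prepend (w : ℕ → ℕ) (len : ℕ) (x : Seq) : Seq := fun i =>
  if i < len then w i else x (i - len)

/-- The Lipschitz constant of `f` on `S` with respect to the distance function `d`,
as the least constant `K ≥ 0` with `|f x − f y| ≤ K d(x,y)` on `S`. -/
noncomputable def LipC (S : Set Seq) (d : Seq → Seq → ℝ) (f : Seq → ℝ) : ℝ :=
  sInf {K : ℝ | 0 ≤ K ∧ ∀ x ∈ S, ∀ y ∈ S, |f x - f y| ≤ K * d x y}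

/-- The Vasershtein (Wasserstein) distance of two Borel measures with respect to the
cost function `d`, as the infimum of `∫ d dm` over couplings `m`. -/
noncomputable def Wass (d : Seq → Seq → ℝ) (μ ν : Measure Seq) : ℝ :=
  sInf {t : ℝ | ∃ m : Measure (Seq × Seq),
    m.map Prod.fst = μ ∧ m.map Prod.snd = ν ∧ t = ∫ p, d p.1 p.2 ∂m}

/-- The dual Ruelle operator `ℒ^*_k` on Borel measures, satisfying
`∫ f d(ℒ^*_k μ) = ∫ ℒ_k(f) dμ`. -/
noncomputable def dualRuelle (W : ℕ → Set ℕ) (A : ℕ → ℕ → ℕ → Prop) (φ : ℕ → Seq → ℝ)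
    (k : ℕ) (μ : Measure Seq) : Measure Seq :=
  Measure.sum fun a : ℕ =>
    (μ.withDensity fun x =>
      ENNReal.ofReal ((Sig W A k).indicator (fun y => Real.exp (φ k y)) (cons a x))).map (cons a)

/-- The iterated dual operator `(ℒ^n_k)^* = ℒ^*_k ∘ ⋯ ∘ ℒ^*_{k+n-1}`. -/
noncomputable def dualRuelleIter (W : ℕ → Set ℕ) (A : ℕ → ℕ → ℕ → Prop) (φ : ℕ → Seq → ℝ) :
    (k : ℕ) → ℕ → Measure Seq → Measure Seq
  | _, 0, μ => μ
  | k, n + 1, μ => dualRuelle W A φ k (dualRuelleIter W A φ (k + 1) n μ)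

/-- A non-stationary shift space `((Σ_n), T, (φ_n))` satisfying property `(H*)`, together
with the choices of the constants `β`, `n_k`, base letters `o_k`, mixing times `m_k`,
connecting words `u(x)` and lower bounds `C_k` used in the coupling construction. -/
structure HstarSystem where
  /-- the alphabets `𝒲¹_n` -/
  W : ℕ → Set ℕ
  /-- the transition matrices: `A n i j` iff `α^n_{ij} = 1` -/
  A : ℕ → ℕ → ℕ → Prop
  /-- the potentials `φ_n : Σ_n → ℝ` -/
  φ : ℕ → Seq → ℝ
  /-- the Hölder parameter -/
  r : ℝ
  /-- the parameter `β ∈ (0,1)` -/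
  β : ℝ
  /-- the Hölder constants `κ_n` of `φ_n` -/
  κ : ℕ → ℝ
  /-- the finite set `ℐ` from the big preimages property -/
  I : Finset ℕ
  /-- the infinite set `𝒦` from the big preimages property -/
  K : Set ℕ
  /-- the base letters `o_k ∈ 𝒲¹_k` -/
  o : ℕ → ℕ
  /-- the integers `n_k` -/
  nseq : ℕ → ℕ
  /-- the mixing times `m_k` -/
  mseq : ℕ → ℕ
  /-- the connecting words `u(x) ∈ 𝒲^{m_k}_k` (as sequences; only the first `m_k`
  symbols are relevant) -/
  u : ℕ → Seq → Seq
  /-- the constants `C_k` -/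
  Cseq : ℕ → ℝ
  hr : 0 < r ∧ r < 1
  hβ : 0 < β ∧ β < 1
  κnonneg : ∀ n, 0 ≤ κ n
  hKinf : K.Infinite
  /-- no zero rows -/
  row : ∀ n, ∀ i ∈ W n, ∃ j ∈ W (n + 1), A n i j
  /-- no zero columns -/
  col : ∀ n, ∀ i ∈ W (n + 1), ∃ j ∈ W n, A n j i
  /-- topological mixing -/
  mixing : ∀ k : ℕ, ∀ a ∈ W k, ∀ b : ℕ, ∃ N : ℕ, ∀ n, N ≤ n → b ∈ W (k + n) →
    ∃ x ∈ Sig W A k, x 0 = a ∧ x n = b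
  /-- big preimages along `𝒦` -/
  bigPre : ∀ n ∈ K, 1 ≤ n → ∀ a ∈ W n, ∃ b ∈ I, (b : ℕ) ∈ W (n - 1) ∧ A (n - 1) b a
  /-- `ℒ_n(1) = 1` -/
  normalized : ∀ k, ∀ x ∈ Sig W A (k + 1), Ruelle W A φ k (fun _ => 1) x = 1
  /-- `φ_n` is locally `(r,2)`-Hölder for `n ∉ 𝒦` -/
  holder2 : ∀ n ∉ K, HolderOn (Sig W A n) r (κ n) 2 (φ n)
  /-- `φ_n` is locally `(r,1)`-Hölder for `n ∈ 𝒦` -/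
  holder1 : ∀ n ∈ K, HolderOn (Sig W A n) r (κ n) 1 (φ n)
  ho : ∀ k, o k ∈ W k
  /-- `n_k ≥ ⌊−log α_k / log r⌋ + 1` where `α_k = B_k/β` -/
  hn : ∀ k, (⌊-Real.log (Bconst κ r k / β) / Real.log r⌋ + 1 : ℤ) ≤ (nseq k : ℤ)
  /-- `m_k ≥ 1`, `k + m_k ∈ 𝒦` -/
  hm_mem : ∀ k, 1 ≤ mseq k ∧ k + mseq k ∈ K
  /-- `(A_k ⋯ A_{k+m_k−2})_{o_k j} ≥ 1` for all `j ∈ ℐ ∩ 𝒲¹_{k+m_k−1}` -/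
  hm_conn : ∀ k, ∀ j ∈ I, (j : ℕ) ∈ W (k + mseq k - 1) →
    ∃ w : ℕ → ℕ, Adm W A k w (mseq k) ∧ w 0 = o k ∧ w (mseq k - 1) = j
  /-- minimality of `m_k` -/
  hm_min : ∀ k n, (1 ≤ n ∧ k + n ∈ K ∧ ∀ j ∈ I, (j : ℕ) ∈ W (k + n - 1) →
      ∃ w : ℕ → ℕ, Adm W A k w n ∧ w 0 = o k ∧ w (n - 1) = j) → mseq k ≤ n
  /-- the connecting word `u(x)` starts at `o_k`, ends in `ℐ`, and
  `x ∈ T^{m_k}([u(x)]_k)` -/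
  hu : ∀ k, ∀ x ∈ Sig W A (k + mseq k), prepend (u k x) (mseq k) x ∈ Sig W A k ∧
    u k x 0 = o k ∧ u k x (mseq k - 1) ∈ I
  hC_pos : ∀ k, 0 < Cseq k
  /-- `C_k` is a lower bound for `e^{S_{m_k} φ_k (τ_{u(x)} x)}` -/
  hC_le : ∀ k, ∀ x ∈ Sig W A (k + mseq k),
    Cseq k ≤ Real.exp (birkhoff φ k (mseq k) (prepend (u k x) (mseq k) x))

namespace HstarSystem

variable (S : HstarSystem)

/-- `α_k := B_k / β`. -/
noncomputable def alphaC (k : ℕ) : ℝ := Bconst S.κ S.r k / S.β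

/-- the metric `d̄_k(x,y) := min{1, α_k d_r(x,y)}`. -/
noncomputable def dbar (k : ℕ) (x y : Seq) : ℝ := min 1 (S.alphaC k * dr S.r x y)

/-- `s_k := 1 − (1 − r^{n_k} α_k) C_{k+n_k}/B_{k+n_k}`. -/
noncomputable def sconst (k : ℕ) : ℝ :=
  1 - (1 - S.r ^ S.nseq k * S.alphaC k) * S.Cseq (k + S.nseq k) / Bconst S.κ S.r (k + S.nseq k)

/-- `t_k := max{β, s_k}`. -/
noncomputable def tconst (k : ℕ) : ℝ := max S.β (S.sconst k)

/-- `l_k := n_k + m_{k+n_k}`. -/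
def lconst (k : ℕ) : ℕ := S.nseq k + S.mseq (k + S.nseq k)

end HstarSystem

theorem cons_shift (z : Seq) : cons (z 0) (shift z) = z := by
  funext i; cases i <;> rfl

theorem shift_cons (a : ℕ) (x : Seq) : shift (cons a x) = x := rfl

theorem agrees_cons {x y : Seq} {j : ℕ} (h : agrees x y j) (a : ℕ) :
    agrees (cons a x) (cons a y) (j + 1) := by
  intro i hi
  cases i with
  | zero => rfl
  | succ i => exact h i (by omega)

theorem mem_cons {W : ℕ → Set ℕ} {A : ℕ → ℕ → ℕ → Prop} {k a : ℕ} {x : Seq} :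
    cons a x ∈ Sig W A k ↔ a ∈ W k ∧ A k a (x 0) ∧ x ∈ Sig W A (k + 1) := by
  constructor
  · rintro ⟨h1, h2⟩
    refine ⟨h1 0, h2 0, fun i => ?_, fun i => ?_⟩
    · have := h1 (i + 1)
      rwa [show k + (i + 1) = k + 1 + i by ring] at this
    · have := h2 (i + 1)
      rwa [show k + (i + 1) = k + 1 + i by ring] at this
  · rintro ⟨h0, h1, h2, h3⟩
    refine ⟨fun i => ?_, fun i => ?_⟩
    · cases i with
      | zero => exact h0
      | succ i => rw [show k + (i + 1) = k + 1 + i by ring]; exact h2 i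
    · cases i with
      | zero => exact h1
      | succ i => rw [show k + (i + 1) = k + 1 + i by ring]; exact h3 i

theorem shift_mem {W : ℕ → Set ℕ} {A : ℕ → ℕ → ℕ → Prop} {k : ℕ} {z : Seq}
    (h : z ∈ Sig W A k) : shift z ∈ Sig W A (k + 1) := by
  rw [← cons_shift z] at h
  exact (mem_cons.1 h).2.2

theorem shift_iter_mem {W : ℕ → Set ℕ} {A : ℕ → ℕ → ℕ → Prop} {k : ℕ} {z : Seq}
    (h : z ∈ Sig W A k) (n : ℕ) : shift^[n] z ∈ Sig W A (k + n) := by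
  induction n with
  | zero => exact h
  | succ n ih => rw [Function.iterate_succ_apply']; exact shift_mem ih

theorem shift_iter_apply (z : Seq) (n i : ℕ) : (shift^[n] z) i = z (i + n) := by
  induction n generalizing i with
  | zero => rfl
  | succ n ih =>
    rw [Function.iterate_succ_apply']
    show (shift^[n] z) (i + 1) = _
    rw [ih]; congr 1; ring

theorem shift_prepend (w : ℕ → ℕ) (n : ℕ) (x : Seq) : shift^[n] (prepend w n x) = x := by
  funext i
  rw [shift_iter_apply]; simp [prepend]

theorem mem_cons_congr {W : ℕ → Set ℕ} {A : ℕ → ℕ → ℕ → Prop} {k a : ℕ} {x y : Seq}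
    (hx : x ∈ Sig W A (k + 1)) (hy : y ∈ Sig W A (k + 1)) (h : x 0 = y 0) :
    cons a x ∈ Sig W A k ↔ cons a y ∈ Sig W A k := by
  rw [mem_cons, mem_cons, h]; simp [hx, hy]

theorem dr_le {r : ℝ} (hr0 : 0 < r) (hr1 : r < 1) {x y : Seq} {n : ℕ} (h : agrees x y n) :
    dr r x y ≤ r ^ n := by
  unfold dr
  split_ifs with hxy
  · positivity
  · apply pow_le_pow_of_le_one hr0.le hr1.le
    have hne : {i | x i ≠ y i}.Nonempty := Function.ne_iff.1 hxy
    apply le_csInf hne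
    intro i hi
    by_contra hlt
    exact hi (h i (by omega))

theorem dr_eq {r : ℝ} {x y : Seq} (hxy : x ≠ y) :
    ∃ j, agrees x y j ∧ dr r x y = r ^ j := by
  refine ⟨sInf {i | x i ≠ y i}, fun i hi => ?_, by simp [dr, hxy]⟩
  by_contra h
  exact Nat.notMem_of_lt_sInf hi h

theorem dr_nonneg {r : ℝ} (hr0 : 0 < r) (x y : Seq) : 0 ≤ dr r x y := by
  unfold dr; split_ifs <;> positivity

namespace HstarSystem
variable (S : HstarSystem)

abbrev Sg (k : ℕ) : Set Seq := Sig S.W S.A k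
noncomputable abbrev L (k n : ℕ) (f : Seq → ℝ) : Seq → ℝ := RuelleIter S.W S.A S.φ k n f

open scoped Classical in
theorem summable_one {k : ℕ} {x : Seq} (hx : x ∈ S.Sg (k + 1)) :
    Summable fun a : ℕ => if cons a x ∈ S.Sg k then Real.exp (S.φ k (cons a x)) else 0 := by
  have h := S.normalized k x hx
  unfold Ruelle at h
  simp only [mul_one] at h
  by_contra hn
  rw [tsum_eq_zero_of_not_summable hn] at h
  exact zero_ne_one h

def BddOn (k : ℕ) (f : Seq → ℝ) : Prop := ∃ M, ∀ x ∈ S.Sg k, |f x| ≤ M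

open scoped Classical in
theorem summable_f {k : ℕ} {f : Seq → ℝ} (hf : S.BddOn k f) {x : Seq}
    (hx : x ∈ S.Sg (k + 1)) :
    Summable fun a : ℕ => if cons a x ∈ S.Sg k
      then Real.exp (S.φ k (cons a x)) * f (cons a x) else 0 := by
  obtain ⟨M, hM⟩ := hf
  refine Summable.of_norm_bounded ((S.summable_one hx).mul_right M) fun a => ?_
  split_ifs with h
  · rw [norm_mul, Real.norm_of_nonneg (Real.exp_nonneg _)]
    exact mul_le_mul_of_nonneg_left (hM _ h) (Real.exp_nonneg _)
  · simp

theorem ruelle_affine {k : ℕ} {f g : Seq → ℝ} (hf : S.BddOn k f) {x : Seq}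
    (hx : x ∈ S.Sg (k + 1)) (a s : ℝ) (hg : ∀ z ∈ S.Sg k, g z = a + s * f z) :
    Ruelle S.W S.A S.φ k g x = a + s * Ruelle S.W S.A S.φ k f x := by
  classical
  have h1 := S.normalized k x hx
  unfold Ruelle at h1 ⊢
  simp only [mul_one] at h1
  rw [← tsum_mul_left]
  conv_rhs => rw [← mul_one a, ← h1, ← tsum_mul_left]
  rw [← ((S.summable_one hx).mul_left a).tsum_add ((S.summable_f hf hx).mul_left s)]
  congr 1; funext b
  by_cases h : cons b x ∈ Sig S.W S.A k
  · simp only [h, if_true]; rw [hg _ h]; ring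
  · simp [h]

theorem ruelle_mono {k : ℕ} {f g : Seq → ℝ} (hf : S.BddOn k f) (hg : S.BddOn k g) {x : Seq}
    (hx : x ∈ S.Sg (k + 1)) (h : ∀ z ∈ S.Sg k, f z ≤ g z) :
    Ruelle S.W S.A S.φ k f x ≤ Ruelle S.W S.A S.φ k g x := by
  classical
  refine (S.summable_f hf hx).tsum_le_tsum (fun a => ?_) (S.summable_f hg hx)
  split_ifs with hm
  · exact mul_le_mul_of_nonneg_left (h _ hm) (Real.exp_nonneg _)
  · exact le_rfl

theorem bdd_const (k : ℕ) (c : ℝ) : S.BddOn k (fun _ => c) := ⟨|c|, fun _ _ => le_rfl⟩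

theorem ruelle_const {k : ℕ} {x : Seq} (hx : x ∈ S.Sg (k + 1)) (c : ℝ) :
    Ruelle S.W S.A S.φ k (fun _ => c) x = c := by
  have := S.ruelle_affine (S.bdd_const k 0) hx c 0 (g := fun _ => c) (by simp)
  simpa using this

theorem bdd_ruelle {k : ℕ} {f : Seq → ℝ} (hf : S.BddOn k f) :
    S.BddOn (k + 1) (Ruelle S.W S.A S.φ k f) := by
  have hf' := hf
  obtain ⟨M, hM⟩ := hf
  refine ⟨M, fun x hx => abs_le.2 ⟨?_, ?_⟩⟩
  · rw [← S.ruelle_const hx (-M)]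
    exact S.ruelle_mono (S.bdd_const _ _) hf' hx fun z hz => (abs_le.1 (hM z hz)).1
  · rw [← S.ruelle_const hx M]
    exact S.ruelle_mono hf' (S.bdd_const _ _) hx fun z hz => (abs_le.1 (hM z hz)).2

theorem bdd_L {k : ℕ} {f : Seq → ℝ} (hf : S.BddOn k f) (n : ℕ) :
    S.BddOn (k + n) (S.L k n f) := by
  induction n with
  | zero => exact hf
  | succ n ih => exact S.bdd_ruelle ih

theorem L_affine {k : ℕ} {f g : Seq → ℝ} (hf : S.BddOn k f) (a s : ℝ)
    (hg : ∀ z ∈ S.Sg k, g z = a + s * f z) (n : ℕ) :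
    ∀ x ∈ S.Sg (k + n), S.L k n g x = a + s * S.L k n f x := by
  induction n with
  | zero => exact hg
  | succ n ih => exact fun x hx => S.ruelle_affine (S.bdd_L hf n) hx a s ih

theorem L_le {k : ℕ} {f : Seq → ℝ} (hf : S.BddOn k f) {c : ℝ}
    (h : ∀ z ∈ S.Sg k, f z ≤ c) (n : ℕ) : ∀ x ∈ S.Sg (k + n), S.L k n f x ≤ c := by
  induction n with
  | zero => exact h
  | succ n ih =>
    intro x hx
    have := S.ruelle_mono (S.bdd_L hf n) (S.bdd_const _ c) hx ih
    rwa [S.ruelle_const (k := k + n) hx] at this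

theorem le_L {k : ℕ} {f : Seq → ℝ} (hf : S.BddOn k f) {c : ℝ}
    (h : ∀ z ∈ S.Sg k, c ≤ f z) (n : ℕ) : ∀ x ∈ S.Sg (k + n), c ≤ S.L k n f x := by
  induction n with
  | zero => exact h
  | succ n ih =>
    intro x hx
    have := S.ruelle_mono (S.bdd_const _ c) (S.bdd_L hf n) hx ih
    rwa [S.ruelle_const (k := k + n) hx] at this

theorem L_add (k l n : ℕ) (f : Seq → ℝ) : S.L k (l + n) f = S.L (k + l) n (S.L k l f) := by
  induction n with
  | zero => rfl
  | succ n ih =>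
    show Ruelle S.W S.A S.φ (k + (l + n)) (S.L k (l + n) f) = Ruelle S.W S.A S.φ (k + l + n) _
    rw [ih, Nat.add_assoc]

/-- single branch bound -/
theorem branch {k : ℕ} {f : Seq → ℝ} (hf : S.BddOn k f) (h0 : ∀ z ∈ S.Sg k, 0 ≤ f z)
    {z : Seq} (hz : z ∈ S.Sg k) (n : ℕ) :
    Real.exp (birkhoff S.φ k n z) * f z ≤ S.L k n f (shift^[n] z) := by
  classical
  induction n with
  | zero => show _ ≤ f z; simp [birkhoff]
  | succ n ih =>
    have hm : shift^[n] z ∈ S.Sg (k + n) := shift_iter_mem hz n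
    have hx : shift (shift^[n] z) ∈ S.Sg (k + n + 1) := shift_mem hm
    rw [Function.iterate_succ_apply']
    have hs := S.summable_f (S.bdd_L hf n) hx
    have h1 := hs.le_tsum ((shift^[n] z) 0) (fun b _ => by
      split_ifs with h
      · exact mul_nonneg (Real.exp_nonneg _) (S.le_L hf h0 n _ h)
      · exact le_rfl)
    rw [cons_shift, if_pos hm] at h1
    refine le_trans ?_ h1
    have : birkhoff S.φ k (n + 1) z = S.φ (k + n) (shift^[n] z) + birkhoff S.φ k n z := by
      unfold birkhoff; rw [Finset.sum_range_succ]; ring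
    rw [this, Real.exp_add, mul_assoc]
    exact mul_le_mul_of_nonneg_left ih (Real.exp_nonneg _)

noncomputable def D (k : ℕ) : ℕ → ℝ
  | 0 => 0
  | n + 1 => S.r * (D k n + S.κ (k + n))

theorem logB_succ (m : ℕ) :
    logB S.κ S.r (m + 1) = S.r * (logB S.κ S.r m + S.κ m) := by
  unfold logB
  rw [← Finset.add_sum_Ioc_eq_sum_Icc (by omega : 1 ≤ m + 1)]
  have : Finset.Ioc 1 (m + 1) = (Finset.Icc 1 m).image (· + 1) := by
    ext i; simp only [Finset.mem_Ioc, Finset.mem_image, Finset.mem_Icc]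
    constructor
    · intro h; exact ⟨i - 1, by omega, by omega⟩
    · rintro ⟨j, h, rfl⟩; omega
  rw [this, Finset.sum_image (by intro a _ b _ h; simpa using h), mul_add, Finset.mul_sum]
  simp only [Nat.add_sub_add_right, Nat.add_sub_cancel]
  rw [add_comm]
  congr 1
  · exact Finset.sum_congr rfl fun i _ => by ring
  · ring

theorem logB_nonneg (m : ℕ) : 0 ≤ logB S.κ S.r m := by
  have := S.hr.1
  exact Finset.sum_nonneg fun i _ => mul_nonneg (S.κnonneg _) (by positivity)

theorem D_le (k n : ℕ) : S.D k n ≤ logB S.κ S.r (k + n) := by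
  induction n with
  | zero => exact S.logB_nonneg _
  | succ n ih =>
    rw [← Nat.add_assoc, logB_succ, D]
    have := S.hr.1
    gcongr

theorem holder (n : ℕ) : HolderOn (Sig S.W S.A n) S.r (S.κ n) 2 (S.φ n) := by
  by_cases h : n ∈ S.K
  · exact fun k hk => S.holder1 n h k (by omega)
  · exact S.holder2 n h

theorem distortion {k : ℕ} {f g : Seq → ℝ} (hf : S.BddOn k f) (hg : S.BddOn k g)
    (hg0 : ∀ z ∈ S.Sg k, 0 ≤ g z) (n : ℕ) : ∀ j, 1 ≤ j →
    (∀ a ∈ S.Sg k, ∀ b ∈ S.Sg k, agrees a b (n + j) → f a ≤ g b) →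
    ∀ x ∈ S.Sg (k + n), ∀ y ∈ S.Sg (k + n), agrees x y j →
      S.L k n f x ≤ Real.exp (S.D k n * S.r ^ j) * S.L k n g y := by
  classical
  induction n with
  | zero =>
    intro j _ h x hx y hy hxy
    show f x ≤ _ * g y
    simpa [D] using h x hx y hy (by simpa using hxy)
  | succ n ih =>
    intro j hj h x hx y hy hxy
    have ih' := ih (j + 1) (by omega) (fun a ha b hb hab => h a ha b hb (by
      rwa [show n + 1 + j = n + (j + 1) by ring]))
    show Ruelle S.W S.A S.φ (k + n) (S.L k n f) x ≤ _ * Ruelle S.W S.A S.φ (k + n) (S.L k n g) y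
    unfold Ruelle
    rw [← tsum_mul_left]
    refine (S.summable_f (S.bdd_L hf n) hx).tsum_le_tsum (fun a => ?_)
      ((S.summable_f (S.bdd_L hg n) hy).mul_left _)
    have hiff : cons a x ∈ Sig S.W S.A (k + n) ↔ cons a y ∈ Sig S.W S.A (k + n) :=
      mem_cons_congr hx hy (hxy 0 hj)
    by_cases hm : cons a x ∈ Sig S.W S.A (k + n)
    · have hm' := hiff.1 hm
      rw [if_pos hm, if_pos hm']
      have hag := agrees_cons hxy a
      have h1 := ih' _ hm _ hm' hag
      have h2 := S.holder (k + n) (j + 1) (by omega) _ hm _ hm' hag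
      have hG : 0 ≤ S.L k n g (cons a y) := S.le_L hg hg0 n _ hm'
      have h3 : S.φ (k + n) (cons a x) ≤ S.φ (k + n) (cons a y) + S.κ (k + n) * S.r ^ (j + 1) := by
        linarith [(abs_le.1 h2).2]
      calc _ ≤ Real.exp (S.φ (k + n) (cons a x)) *
            (Real.exp (S.D k n * S.r ^ (j + 1)) * S.L k n g (cons a y)) := by
              exact mul_le_mul_of_nonneg_left h1 (Real.exp_nonneg _)
        _ ≤ Real.exp (S.φ (k + n) (cons a y) + S.κ (k + n) * S.r ^ (j + 1)) *
            (Real.exp (S.D k n * S.r ^ (j + 1)) * S.L k n g (cons a y)) := by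
              gcongr
        _ = _ := by
              have : S.D k (n + 1) * S.r ^ j
                = S.D k n * S.r ^ (j + 1) + S.κ (k + n) * S.r ^ (j + 1) := by
                rw [D]; ring
              rw [this, Real.exp_add, Real.exp_add]; ring
    · rw [if_neg hm, if_neg (fun h => hm (hiff.2 h)), mul_zero]

def Lip (k : ℕ) (Λ : ℝ) (f : Seq → ℝ) : Prop :=
  ∀ x ∈ S.Sg k, ∀ y ∈ S.Sg k, f x - f y ≤ Λ * S.dbar k x y

theorem exists_mem (k : ℕ) : ∃ x, x ∈ S.Sg k := by
  choose! s hs hs' using S.row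
  let x : ℕ → ℕ := fun i => Nat.rec (S.o k) (fun i a => s (k + i) a) i
  have hx : ∀ i, x i ∈ S.W (k + i) := by
    intro i
    induction i with
    | zero => exact S.ho k
    | succ i ih => exact hs (k + i) _ ih
  exact ⟨x, hx, fun i => hs' (k + i) _ (hx i)⟩

theorem B_ge_one (k : ℕ) : 1 ≤ Bconst S.κ S.r k := Real.one_le_exp (S.logB_nonneg k)

theorem alpha_ge_one (k : ℕ) : 1 ≤ S.alphaC k := by
  unfold alphaC
  rw [le_div_iff₀ S.hβ.1]
  linarith [S.B_ge_one k, S.hβ.2]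

theorem dbar_le_one (k : ℕ) (x y : Seq) : S.dbar k x y ≤ 1 := min_le_left _ _

theorem dbar_nonneg (k : ℕ) (x y : Seq) : 0 ≤ S.dbar k x y :=
  le_min zero_le_one (mul_nonneg (by linarith [S.alpha_ge_one k]) (dr_nonneg S.hr.1 _ _))

theorem Lip.range {k : ℕ} {Λ : ℝ} {f : Seq → ℝ} (hΛ : 0 ≤ Λ) (h : S.Lip k Λ f) :
    ∃ c, ∀ x ∈ S.Sg k, c ≤ f x ∧ f x ≤ c + Λ := by
  have key : ∀ x ∈ S.Sg k, ∀ y ∈ S.Sg k, f x - Λ ≤ f y := by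
    intro x hx y hy
    have := h x hx y hy
    nlinarith [S.dbar_le_one k x y]
  obtain ⟨x0, hx0⟩ := S.exists_mem k
  have hb : BddBelow (f '' S.Sg k) := ⟨f x0 - Λ, by rintro _ ⟨y, hy, rfl⟩; exact key _ hx0 _ hy⟩
  refine ⟨sInf (f '' S.Sg k), fun x hx => ⟨csInf_le hb ⟨x, hx, rfl⟩, ?_⟩⟩
  have : f x - Λ ≤ sInf (f '' S.Sg k) :=
    le_csInf ⟨_, x0, hx0, rfl⟩ (by rintro _ ⟨y, hy, rfl⟩; exact key _ hx _ hy)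
  linarith

theorem bdd_of_range {k : ℕ} {c d : ℝ} {f : Seq → ℝ} (h : ∀ x ∈ S.Sg k, c ≤ f x ∧ f x ≤ d) :
    S.BddOn k f :=
  ⟨max |c| |d|, fun x hx => abs_le_max_abs_abs (h x hx).1 (h x hx).2⟩

/-- coupling of two points sharing the first `j ≥ 1` letters -/
theorem close_bound {k n j : ℕ} {Λ c : ℝ} {f : Seq → ℝ} (hΛ : 0 ≤ Λ) (h : S.Lip k Λ f)
    (hc : ∀ x ∈ S.Sg k, c ≤ f x ∧ f x ≤ c + Λ) (hj : 1 ≤ j) {x y : Seq}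
    (hx : x ∈ S.Sg (k + n)) (hy : y ∈ S.Sg (k + n)) (hxy : agrees x y j) :
    S.L k n f x - S.L k n f y ≤
      Λ * (1 - Real.exp (-(S.D k n * S.r ^ j)) * (1 - S.alphaC k * S.r ^ (n + j))) := by
  have hb := S.bdd_of_range hc
  set δ := S.alphaC k * S.r ^ (n + j) with hδ
  have hlip : ∀ a ∈ S.Sg k, ∀ b ∈ S.Sg k, agrees a b (n + j) → f a - f b ≤ Λ * δ := by
    intro a ha b hb hab
    refine (h a ha b hb).trans (mul_le_mul_of_nonneg_left ?_ hΛ)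
    refine (min_le_right _ _).trans (mul_le_mul_of_nonneg_left (dr_le S.hr.1 S.hr.2 hab) ?_)
    linarith [S.alpha_ge_one k]
  let g : Seq → ℝ := fun z => (c + Λ) + (-1) * f z
  let g' : Seq → ℝ := fun z => (c + Λ - Λ * δ) + (-1) * f z
  have bg : S.BddOn k g := S.bdd_of_range (c := 0) (d := Λ) fun z hz => by
    have := hc z hz; simp only [g]; constructor <;> linarith
  have bg' : S.BddOn k g' := S.bdd_of_range (c := - (Λ * δ)) (d := Λ - Λ * δ) fun z hz => by
    have := hc z hz; simp only [g']; constructor <;> linarith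
  have h1 := S.distortion bg' bg (fun z hz => by have := hc z hz; simp only [g]; linarith)
    n j hj (fun a ha b hb hab => by
      have := hlip b hb a ha (fun i hi => (hab i hi).symm)
      simp only [g, g']; linarith) y hy x hx (fun i hi => (hxy i hi).symm)
  rw [S.L_affine hb _ (-1) (fun z _ => rfl) n y hy, S.L_affine hb _ (-1) (fun z _ => rfl) n x hx]
    at h1
  have h2 := S.le_L hb (fun z hz => (hc z hz).1) n y hy
  set E := Real.exp (S.D k n * S.r ^ j)
  rw [Real.exp_neg]
  have hE : 0 < E := Real.exp_pos _
  have hD : 0 ≤ S.D k n := by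
    clear_value E δ
    clear * - S
    induction n with
    | zero => exact le_rfl
    | succ n ih => exact mul_nonneg S.hr.1.le (add_nonneg ih (S.κnonneg _))
  have hE1 : 1 ≤ E := Real.one_le_exp (mul_nonneg hD (pow_nonneg S.hr.1.le _))
  have hEi : E⁻¹ ≤ 1 := inv_le_one_of_one_le₀ hE1
  have h3 : E⁻¹ * (c + Λ - Λ * δ + -1 * S.L k n f y) ≤ c + Λ + -1 * S.L k n f x := by
    rw [inv_mul_le_iff₀ hE]; exact h1
  nlinarith [mul_nonneg (sub_nonneg.2 hEi) (sub_nonneg.2 h2)]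

theorem rn_alpha (k : ℕ) : S.r ^ S.nseq k * S.alphaC k < 1 := by
  have h := S.hn k
  have hlr : Real.log S.r < 0 := Real.log_neg S.hr.1 S.hr.2
  have ha : 0 < S.alphaC k := by linarith [S.alpha_ge_one k]
  have h1 : -Real.log (S.alphaC k) / Real.log S.r < S.nseq k := by
    have := Int.lt_floor_add_one (-Real.log (S.alphaC k) / Real.log S.r)
    refine this.trans_le ?_
    exact_mod_cast h
  rw [div_lt_iff_of_neg hlr] at h1
  have hr := S.hr.1
  rw [← Real.log_neg_iff (by positivity), Real.log_mul (by positivity) ha.ne', Real.log_pow]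
  linarith

theorem far_bound {k : ℕ} {Λ : ℝ} {f : Seq → ℝ} (hΛ : 0 ≤ Λ) (h : S.Lip k Λ f) {x y : Seq}
    (hx : x ∈ S.Sg (k + S.lconst k)) (hy : y ∈ S.Sg (k + S.lconst k)) :
    S.L k (S.lconst k) f x - S.L k (S.lconst k) f y ≤ Λ * S.sconst k := by
  obtain ⟨c, hc⟩ := Lip.range S hΛ h
  have hb := S.bdd_of_range hc
  unfold lconst at *
  rw [← Nat.add_assoc] at hx hy
  rw [L_add]
  set n := S.nseq k with hn
  set m := S.mseq (k + n) with hm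
  set F := S.L k n f with hF
  have bF : S.BddOn (k + n) F := S.bdd_L hb n
  obtain ⟨hx1, hx2, -⟩ := S.hu (k + n) x hx
  obtain ⟨hy1, hy2, -⟩ := S.hu (k + n) y hy
  have hCx := S.hC_le (k + n) x hx
  have hCy := S.hC_le (k + n) y hy
  have hC := S.hC_pos (k + n)
  rw [← hm] at hx1 hy1 hCx hCy
  have hm1 : 1 ≤ m := (S.hm_mem (k + n)).1
  set x' := prepend (S.u (k + n) x) m x with hx'
  set y' := prepend (S.u (k + n) y) m y with hy'
  have hag : agrees x' y' 1 := by
    intro i hi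
    obtain rfl : i = 0 := by omega
    simp only [hx', hy', prepend, if_pos (show 0 < m by omega), hx2, hy2]
  have hFl : ∀ z ∈ S.Sg (k + n), c ≤ F z := S.le_L hb (fun z hz => (hc z hz).1) n
  have hFu : ∀ z ∈ S.Sg (k + n), F z ≤ c + Λ := S.L_le hb (fun z hz => (hc z hz).2) n
  have hcl := S.close_bound hΛ h hc le_rfl hx1 hy1 hag
  -- branches
  let g : Seq → ℝ := fun z => (c + Λ) + (-1) * F z
  let g' : Seq → ℝ := fun z => (-c) + 1 * F z
  have bg : S.BddOn (k + n) g := S.bdd_of_range (c := 0) (d := Λ) fun z hz => by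
    have := hFl z hz; have := hFu z hz; simp only [g]; constructor <;> linarith
  have bg' : S.BddOn (k + n) g' := S.bdd_of_range (c := 0) (d := Λ) fun z hz => by
    have := hFl z hz; have := hFu z hz; simp only [g']; constructor <;> linarith
  have h1 := S.branch bg (fun z hz => by have := hFu z hz; simp only [g]; linarith) hx1 m
  have h2 := S.branch bg' (fun z hz => by have := hFl z hz; simp only [g']; linarith) hy1 m
  rw [hx', shift_prepend, ← hx', S.L_affine bF _ (-1) (fun z _ => rfl) m x hx] at h1
  rw [hy', shift_prepend, ← hy', S.L_affine bF _ 1 (fun z _ => rfl) m y hy] at h2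
  simp only [g, g'] at h1 h2
  have h1' : S.Cseq (k + n) * (c + Λ + -1 * F x') ≤ _ :=
    (mul_le_mul_of_nonneg_right hCx (by linarith [hFu x' hx1])).trans h1
  have h2' : S.Cseq (k + n) * (-c + 1 * F y') ≤ _ :=
    (mul_le_mul_of_nonneg_right hCy (by linarith [hFl y' hy1])).trans h2
  have hr := S.hr
  have hα := S.alpha_ge_one k
  have hrn : S.r ^ n * S.alphaC k < 1 := S.rn_alpha k
  have hδ : S.alphaC k * S.r ^ (n + 1) ≤ S.r ^ n * S.alphaC k := by
    rw [pow_succ]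
    have : 0 ≤ S.r ^ n * S.alphaC k := mul_nonneg (pow_nonneg hr.1.le _) (by linarith)
    nlinarith
  have hE : (Bconst S.κ S.r (k + n))⁻¹ ≤ Real.exp (-(S.D k n * S.r ^ 1)) := by
    rw [Bconst, ← Real.exp_neg]
    apply Real.exp_le_exp.2
    have h1 := S.D_le k n
    have h2 := S.logB_nonneg (k + n)
    have : S.D k n * S.r ≤ logB S.κ S.r (k + n) * S.r :=
      mul_le_mul_of_nonneg_right h1 hr.1.le
    rw [pow_one]
    nlinarith
  have hρ : (Bconst S.κ S.r (k + n))⁻¹ * (1 - S.r ^ n * S.alphaC k) ≤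
      Real.exp (-(S.D k n * S.r ^ 1)) * (1 - S.alphaC k * S.r ^ (n + 1)) :=
    mul_le_mul hE (by linarith) (by linarith) (Real.exp_nonneg _)
  have hcl' : F x' - F y' ≤ Λ * (1 - (Bconst S.κ S.r (k + n))⁻¹ * (1 - S.r ^ n * S.alphaC k)) :=
    hcl.trans (mul_le_mul_of_nonneg_left (by linarith) hΛ)
  have h4 := mul_le_mul_of_nonneg_left hcl' hC.le
  have h5 : S.sconst k = 1 - S.Cseq (k + n) *
      ((Bconst S.κ S.r (k + n))⁻¹ * (1 - S.r ^ n * S.alphaC k)) := by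
    unfold sconst; rw [← hn]; ring
  rw [h5]
  show S.L (k + n) m F x - S.L (k + n) m F y ≤ _
  nlinarith

theorem contraction {k : ℕ} {Λ t : ℝ} {f : Seq → ℝ} (hΛ : 0 ≤ Λ) (h : S.Lip k Λ f)
    (ht : S.tconst k ≤ t) : S.Lip (k + S.lconst k) (t * Λ) (S.L k (S.lconst k) f) := by
  have htβ : S.β ≤ t := (le_max_left _ _).trans ht
  have hts : S.sconst k ≤ t := (le_max_right _ _).trans ht
  have ht0 : 0 ≤ t := S.hβ.1.le.trans htβ
  intro x hx y hy
  by_cases hxy : x = y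
  · subst hxy
    rw [sub_self]
    exact mul_nonneg (mul_nonneg ht0 hΛ) (S.dbar_nonneg _ _ _)
  obtain ⟨j, hag, hd⟩ := dr_eq (r := S.r) hxy
  by_cases hfar : 1 ≤ S.alphaC (k + S.lconst k) * dr S.r x y
  · rw [dbar, min_eq_left hfar]
    refine (S.far_bound hΛ h hx hy).trans ?_
    nlinarith
  push Not at hfar
  rw [dbar, min_eq_right hfar.le]
  rw [hd] at hfar ⊢
  set l := S.lconst k with hl
  have hj : 1 ≤ j := by
    by_contra hj
    obtain rfl : j = 0 := by omega
    linarith [S.alpha_ge_one (k + l), pow_zero S.r]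
  obtain ⟨c, hc⟩ := Lip.range S hΛ h
  refine (S.close_bound hΛ h hc hj hx hy hag).trans ?_
  have hr := S.hr
  set B := Bconst S.κ S.r (k + l) with hB
  have hd0 : 0 ≤ S.r ^ j := pow_nonneg hr.1.le _
  have hB1 : logB S.κ S.r (k + l) + 1 ≤ B := Real.add_one_le_exp _
  have hrl : S.r ^ l * S.alphaC k ≤ 1 := by
    refine le_trans ?_ (S.rn_alpha k).le
    refine mul_le_mul_of_nonneg_right ?_ (by linarith [S.alpha_ge_one k])
    exact pow_le_pow_of_le_one hr.1.le hr.2.le (by rw [hl]; unfold lconst; omega)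
  have hD := S.D_le k l
  have hexp : 1 - S.D k l * S.r ^ j ≤ Real.exp (-(S.D k l * S.r ^ j)) := by
    linarith [Real.add_one_le_exp (-(S.D k l * S.r ^ j))]
  have hexp1 : Real.exp (-(S.D k l * S.r ^ j)) ≤ 1 := by
    apply Real.exp_le_one_iff.2
    have : 0 ≤ S.D k l := by
      clear_value l
      clear * - S
      induction l with
      | zero => exact le_rfl
      | succ n ih => exact mul_nonneg S.hr.1.le (add_nonneg ih (S.κnonneg _))
    nlinarith
  set e := Real.exp (-(S.D k l * S.r ^ j))
  have hδ0 : 0 ≤ S.alphaC k * S.r ^ (l + j) :=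
    mul_nonneg (by linarith [S.alpha_ge_one k]) (pow_nonneg hr.1.le _)
  have hδ : S.alphaC k * S.r ^ (l + j) ≤ S.r ^ j := by
    rw [pow_add]; nlinarith
  have h1 : 1 - e * (1 - S.alphaC k * S.r ^ (l + j)) ≤ B * S.r ^ j := by
    have : S.D k l * S.r ^ j ≤ (B - 1) * S.r ^ j :=
      mul_le_mul_of_nonneg_right (by linarith) hd0
    nlinarith
  have h2 : B * S.r ^ j ≤ t * (S.alphaC (k + l) * S.r ^ j) := by
    have h3 : B = S.β * S.alphaC (k + l) := by
      unfold alphaC; rw [← hB]; field_simp [S.hβ.1.ne']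
    have h4 : 0 ≤ S.alphaC (k + l) * S.r ^ j :=
      mul_nonneg (by linarith [S.alpha_ge_one (k + l)]) hd0
    rw [h3]; nlinarith
  calc _ ≤ Λ * (t * (S.alphaC (k + l) * S.r ^ j)) := mul_le_mul_of_nonneg_left (h1.trans h2) hΛ
    _ = _ := by ring

theorem osc_decay {t : ℝ} (ht : ∀ k, S.tconst k ≤ t) (j : ℕ) : ∀ (k : ℕ) (Λ : ℝ) (f : Seq → ℝ),
    0 ≤ Λ → S.Lip k Λ f → ∃ N, ∀ n, N ≤ n → ∀ x ∈ S.Sg (k + n), ∀ y ∈ S.Sg (k + n),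
      S.L k n f x - S.L k n f y ≤ t ^ j * Λ := by
  induction j with
  | zero =>
    intro k Λ f hΛ h
    obtain ⟨c, hc⟩ := Lip.range S hΛ h
    have hb := S.bdd_of_range hc
    refine ⟨0, fun n _ x hx y hy => ?_⟩
    have h1 := S.le_L hb (fun z hz => (hc z hz).1) n y hy
    have h2 := S.L_le hb (fun z hz => (hc z hz).2) n x hx
    rw [pow_zero, one_mul]; linarith
  | succ j ih =>
    intro k Λ f hΛ h
    have ht0 : 0 ≤ t := S.hβ.1.le.trans ((le_max_left _ _).trans (ht k))
    obtain ⟨N, hN⟩ := ih _ _ _ (mul_nonneg ht0 hΛ) (S.contraction hΛ h (ht k))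
    refine ⟨S.lconst k + N, fun n hn x hx y hy => ?_⟩
    obtain ⟨p, rfl⟩ := Nat.exists_eq_add_of_le (show S.lconst k ≤ n by omega)
    rw [← Nat.add_assoc] at hx hy
    rw [L_add, pow_succ, mul_assoc]
    exact hN p (by omega) x hx y hy

theorem measurable_Sig (k : ℕ) : MeasurableSet (S.Sg k) := by
  have : S.Sg k = (⋂ i, {x : Seq | x i ∈ S.W (k + i)}) ∩
      ⋂ i, {x : Seq | (x i, x (i + 1)) ∈ {p : ℕ × ℕ | S.A (k + i) p.1 p.2}} := by
    ext x; simp [Sig]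
  rw [this]
  refine (MeasurableSet.iInter fun i => ?_).inter (MeasurableSet.iInter fun i => ?_)
  · exact (measurable_pi_apply i) (MeasurableSet.of_discrete (s := S.W (k + i)))
  · exact ((measurable_pi_apply i).prodMk (measurable_pi_apply (i + 1)))
      (MeasurableSet.of_discrete)

theorem measurable_cons (a : ℕ) : Measurable (cons a) := by
  rw [measurable_pi_iff]
  intro i
  cases i with
  | zero => exact measurable_const
  | succ i => exact measurable_pi_apply i

theorem continuousOn_φ (k : ℕ) : ContinuousOn (S.φ k) (S.Sg k) := by
  intro x hx
  rw [ContinuousWithinAt, Metric.tendsto_nhds]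
  intro ε hε
  have hlim : Tendsto (fun n : ℕ => S.κ k * S.r ^ n) atTop (nhds 0) := by
    simpa using (tendsto_pow_atTop_nhds_zero_of_lt_one S.hr.1.le S.hr.2).const_mul (S.κ k)
  obtain ⟨n, hn, hn2⟩ := ((hlim.eventually (gt_mem_nhds hε)).and (eventually_ge_atTop 2)).exists
  have hopen : ∀ᶠ y in nhds x, agrees y x n := by
    have : ∀ i ∈ Set.Iio n, ∀ᶠ y : Seq in nhds x, y i = x i := fun i _ =>
      IsOpen.mem_nhds (s := {y : Seq | y i = x i})
        ((isOpen_discrete ({x i} : Set ℕ)).preimage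
          (continuous_apply (A := fun _ : ℕ => ℕ) i)) rfl
    exact (Filter.eventually_all_finite (Set.finite_Iio n)).2 this
  filter_upwards [nhdsWithin_le_nhds hopen, self_mem_nhdsWithin] with y hy hys
  exact (S.holder k n hn2 y hys x hx hy).trans_lt hn

theorem measurable_density (k : ℕ) :
    Measurable ((S.Sg k).indicator fun y => Real.exp (S.φ k y)) := by
  classical
  rw [← Set.piecewise_eq_indicator]
  exact (S.continuousOn_φ k).rexp.measurable_piecewise continuousOn_const (S.measurable_Sig k)

/-- extended nonnegative Ruelle operator -/
noncomputable def R (k : ℕ) (g : Seq → ENNReal) (x : Seq) : ENNReal :=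
  ∑' a : ℕ, ENNReal.ofReal ((S.Sg k).indicator (fun y => Real.exp (S.φ k y)) (cons a x)) *
    g (cons a x)

theorem measurable_R (k : ℕ) {g : Seq → ENNReal} (hg : Measurable g) : Measurable (S.R k g) := by
  refine Measurable.ennreal_tsum fun a => ?_
  exact (((S.measurable_density k).comp (measurable_cons a)).ennreal_ofReal).mul
    (hg.comp (measurable_cons a))

theorem lintegral_dual (k : ℕ) (μ : Measure Seq) {g : Seq → ENNReal} (hg : Measurable g) :
    ∫⁻ x, g x ∂(dualRuelle S.W S.A S.φ k μ) = ∫⁻ x, S.R k g x ∂μ := by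
  unfold dualRuelle R
  rw [lintegral_sum_measure, lintegral_tsum]
  · congr 1; funext a
    rw [lintegral_map hg (measurable_cons a)]
    exact lintegral_withDensity_eq_lintegral_mul _
        ((S.measurable_density k).comp (measurable_cons a)).ennreal_ofReal
        (hg.comp (measurable_cons a))
  · intro a
    exact ((((S.measurable_density k).comp (measurable_cons a)).ennreal_ofReal).mul
      (hg.comp (measurable_cons a))).aemeasurable

noncomputable def Rn (k : ℕ) : ℕ → (Seq → ENNReal) → Seq → ENNReal
  | 0 => fun g => g
  | n + 1 => fun g => S.R (k + n) (Rn k n g)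

theorem measurable_Rn (k n : ℕ) {g : Seq → ENNReal} (hg : Measurable g) :
    Measurable (S.Rn k n g) := by
  induction n with
  | zero => exact hg
  | succ n ih => exact S.measurable_R _ ih

theorem lintegral_Rn {μ : ℕ → Measure Seq}
    (hμinv : ∀ k, dualRuelle S.W S.A S.φ k (μ (k + 1)) = μ k) (k n : ℕ)
    {g : Seq → ENNReal} (hg : Measurable g) :
    ∫⁻ x, g x ∂(μ k) = ∫⁻ x, S.Rn k n g x ∂(μ (k + n)) := by
  induction n with
  | zero => rfl
  | succ n ih =>
    rw [ih, ← hμinv (k + n), S.lintegral_dual _ _ (S.measurable_Rn k n hg)]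
    rfl

theorem Rn_eq {k : ℕ} {f : Seq → ℝ} (hf : S.BddOn k f) (h0 : ∀ z ∈ S.Sg k, 0 ≤ f z) (n : ℕ) :
    ∀ x ∈ S.Sg (k + n), S.Rn k n (fun z => ENNReal.ofReal (f z)) x
      = ENNReal.ofReal (S.L k n f x) := by
  classical
  induction n with
  | zero => exact fun _ _ => rfl
  | succ n ih =>
    intro x hx
    show S.R (k + n) _ x = ENNReal.ofReal (Ruelle S.W S.A S.φ (k + n) (S.L k n f) x)
    unfold R Ruelle
    rw [ENNReal.ofReal_tsum_of_nonneg _ (S.summable_f (S.bdd_L hf n) hx)]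
    · congr 1; funext a
      by_cases hm : cons a x ∈ Sig S.W S.A (k + n)
      · rw [if_pos hm, Set.indicator_of_mem hm, ih _ hm, ENNReal.ofReal_mul (Real.exp_nonneg _)]
      · rw [if_neg hm, Set.indicator_of_notMem hm]; simp
    · intro a
      split_ifs with hm
      · exact mul_nonneg (Real.exp_nonneg _) (S.le_L hf h0 n _ hm)
      · exact le_rfl

theorem integral_bounds_nonneg {μ : ℕ → Measure Seq}
    (hμp : ∀ k, IsProbabilityMeasure (μ k)) (hμs : ∀ k, μ k (S.Sg k) = 1)
    (hμinv : ∀ k, dualRuelle S.W S.A S.φ k (μ (k + 1)) = μ k) {k : ℕ} {f : Seq → ℝ}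
    (hfm : Measurable f) (hf : S.BddOn k f) (h0 : ∀ z ∈ S.Sg k, 0 ≤ f z) (n : ℕ) {a b : ℝ}
    (ha : 0 ≤ a) (hb : 0 ≤ b)
    (hab : ∀ x ∈ S.Sg (k + n), a ≤ S.L k n f x ∧ S.L k n f x ≤ b) :
    a ≤ ∫ y, f y ∂(μ k) ∧ ∫ y, f y ∂(μ k) ≤ b := by
  have := hμp
  have hae : ∀ k, ∀ᵐ x ∂(μ k), x ∈ S.Sg k := fun k =>
    (prob_compl_eq_zero_iff (S.measurable_Sig k)).2 (hμs k)
  rw [integral_eq_lintegral_of_nonneg_ae ((hae k).mono h0) hfm.aestronglyMeasurable,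
    S.lintegral_Rn hμinv k n hfm.ennreal_ofReal]
  have hle : ∫⁻ x, S.Rn k n (fun z => ENNReal.ofReal (f z)) x ∂(μ (k + n)) ≤ ENNReal.ofReal b := by
    calc _ ≤ ∫⁻ x, ENNReal.ofReal b ∂(μ (k + n)) := by
          refine lintegral_mono_ae ((hae (k + n)).mono fun x hx => ?_)
          rw [S.Rn_eq hf h0 n x hx]
          exact ENNReal.ofReal_le_ofReal (hab x hx).2
      _ = _ := by simp
  have hge : ENNReal.ofReal a ≤ ∫⁻ x, S.Rn k n (fun z => ENNReal.ofReal (f z)) x ∂(μ (k + n)) := by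
    calc _ = ∫⁻ x, ENNReal.ofReal a ∂(μ (k + n)) := by simp
      _ ≤ _ := by
          refine lintegral_mono_ae ((hae (k + n)).mono fun x hx => ?_)
          rw [S.Rn_eq hf h0 n x hx]
          exact ENNReal.ofReal_le_ofReal (hab x hx).1
  constructor
  · rw [← ENNReal.ofReal_le_iff_le_toReal (hle.trans_lt ENNReal.ofReal_lt_top).ne]
    exact hge
  · exact ENNReal.toReal_le_of_le_ofReal hb hle

theorem integral_bounds {μ : ℕ → Measure Seq}
    (hμp : ∀ k, IsProbabilityMeasure (μ k)) (hμs : ∀ k, μ k (S.Sg k) = 1)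
    (hμinv : ∀ k, dualRuelle S.W S.A S.φ k (μ (k + 1)) = μ k) {k : ℕ} {f : Seq → ℝ}
    (hfm : Measurable f) (hf : S.BddOn k f) (n : ℕ) {a b : ℝ}
    (hab : ∀ x ∈ S.Sg (k + n), a ≤ S.L k n f x ∧ S.L k n f x ≤ b) :
    a ≤ ∫ y, f y ∂(μ k) ∧ ∫ y, f y ∂(μ k) ≤ b := by
  have := hμp
  have hae : ∀ᵐ x ∂(μ k), x ∈ S.Sg k :=
    (prob_compl_eq_zero_iff (S.measurable_Sig k)).2 (hμs k)
  have hf' := hf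
  obtain ⟨M, hM⟩ := hf'
  set c := max (max M (-a)) (-b) with hc
  have c1 : M ≤ c := (le_max_left _ _).trans (le_max_left _ _)
  have c2 : -a ≤ c := (le_max_right _ _).trans (le_max_left _ _)
  have c3 : -b ≤ c := le_max_right _ _
  let g : Seq → ℝ := fun z => c + 1 * f z
  have hg0 : ∀ z ∈ S.Sg k, 0 ≤ g z ∧ g z ≤ c + M := fun z hz => by
    have := abs_le.1 (hM z hz)
    simp only [g]; constructor <;> linarith
  have hi : Integrable f (μ k) :=
    Integrable.of_bound hfm.aestronglyMeasurable M (hae.mono fun x hx => hM x hx)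
  have h := S.integral_bounds_nonneg hμp hμs hμinv (f := g)
    (measurable_const.add (hfm.const_mul 1)) (S.bdd_of_range hg0) (fun z hz => (hg0 z hz).1) n
    (a := c + a) (b := c + b) (by linarith) (by linarith) (fun x hx => by
      rw [S.L_affine hf c 1 (fun z _ => rfl) n x hx]
      have := hab x hx
      constructor <;> linarith)
  have hint : ∫ y, g y ∂(μ k) = c + ∫ y, f y ∂(μ k) := by
    simp only [g, one_mul]
    rw [integral_add (integrable_const c) hi]; simp
  rw [hint] at h
  constructor <;> linarith [h.1, h.2]

end HstarSystem

/-- (Corollary, convergence.) Under property `(H*)`, if there is an invariant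
sequence `(μ_k)` of Borel probability measures and the `n_k` are chosen so that
`sup_k t_k < 1`, then for every Lipschitz function `f : Σ_k → ℝ` (with respect to `d_r`) one
has `‖ℒ^n_k(f) − ∫ f dμ_k‖_∞ → 0` as `n → ∞`. -/
theorem ruelle_iter_converges_to_integral (S : HstarSystem)
    (ht : ∃ t : ℝ, t < 1 ∧ ∀ k, S.tconst k ≤ t)
    (μ : ℕ → Measure Seq)
    (hμp : ∀ k, IsProbabilityMeasure (μ k)) (hμs : ∀ k, μ k (Sig S.W S.A k) = 1)
    (hμinv : ∀ k, dualRuelle S.W S.A S.φ k (μ (k + 1)) = μ k)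
    (k : ℕ) (f : Seq → ℝ) (hfm : Measurable f)
    (hf : ∃ K : ℝ, 0 ≤ K ∧ ∀ x ∈ Sig S.W S.A k, ∀ y ∈ Sig S.W S.A k,
      |f x - f y| ≤ K * dr S.r x y) :
    Filter.Tendsto
      (fun n => sSup {t : ℝ | ∃ x ∈ Sig S.W S.A (k + n),
        t = |RuelleIter S.W S.A S.φ k n f x - ∫ y, f y ∂(μ k)|})
      Filter.atTop (nhds 0) := by
  obtain ⟨t, ht1, ht⟩ := ht
  obtain ⟨K, hK, hfK⟩ := hf
  have ht0 : 0 ≤ t := S.hβ.1.le.trans ((le_max_left _ _).trans (ht k))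
  have hlip : S.Lip k K f := by
    intro x hx y hy
    refine ((le_abs_self _).trans (hfK x hx y hy)).trans (mul_le_mul_of_nonneg_left ?_ hK)
    have h0 := dr_nonneg S.hr.1 x y
    refine le_min ?_ ?_
    · simpa using dr_le S.hr.1 S.hr.2 (n := 0) (x := x) (y := y) (fun i hi => by omega)
    · nlinarith [S.alpha_ge_one k]
  obtain ⟨c, hc⟩ := HstarSystem.Lip.range S hK hlip
  have hb := S.bdd_of_range hc
  rw [Metric.tendsto_atTop]
  intro ε hε
  have hlim : Tendsto (fun j : ℕ => t ^ j * K) atTop (nhds 0) := by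
    simpa using (tendsto_pow_atTop_nhds_zero_of_lt_one ht0 ht1).mul_const K
  obtain ⟨j, hj⟩ := (hlim.eventually (gt_mem_nhds hε)).exists
  obtain ⟨N, hN⟩ := S.osc_decay ht j k K f hK hlip
  refine ⟨N, fun n hn => ?_⟩
  have hosc := hN n hn
  have hle : sSup {t : ℝ | ∃ x ∈ Sig S.W S.A (k + n),
        t = |RuelleIter S.W S.A S.φ k n f x - ∫ y, f y ∂(μ k)|} ≤ t ^ j * K := by
    apply Real.sSup_le
    · rintro _ ⟨x, hx, rfl⟩
      have h := S.integral_bounds hμp hμs hμinv hfm hb n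
        (a := S.L k n f x - t ^ j * K) (b := S.L k n f x + t ^ j * K) (fun y hy => by
          have h1 := hosc x hx y hy
          have h2 := hosc y hy x hx
          constructor <;> linarith)
      exact abs_le.2 ⟨by linarith [h.2], by linarith [h.1]⟩
    · positivity
  have hge : 0 ≤ sSup {t : ℝ | ∃ x ∈ Sig S.W S.A (k + n),
        t = |RuelleIter S.W S.A S.φ k n f x - ∫ y, f y ∂(μ k)|} := by
    apply Real.sSup_nonneg
    rintro _ ⟨x, hx, rfl⟩
    exact abs_nonneg _
  rw [Real.dist_eq, sub_zero, abs_of_nonneg hge]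
  linarith


end NSShift
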